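/- Characterization of tamper-permitting paths via tamper sets: for any path π = π'§v of a data flow graph (with π' a nonempty path) that starts at a measurement event, π permits tampering if and only if ϱ(v) ∈ ts(π') or ϱ'(v) ∈ ts(π'). -/

import Mathlib

namespace Copland

/-- Places are drawn from a countable set. -/
abbrev Place := ℕ
/-- Symbols (measurement/target identifiers) are drawn from a countable set. -/
abbrev Symb := ℕ

/-- Splitting specifications: `+` or `-`. -/
inductive Split where
  | plus
  | minus
deriving DecidableEq, Repr

/-- Copland phrases. -/
inductive Phrase where
  | meas : Symb → Place → Symb → Phrase          -- measurement  m q s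
  | att  : Place → Phrase → Phrase               -- @_q [ t ]
  | copy : Phrase                                 -- _
  | sign : Phrase                                 -- !
  | hash : Phrase                                 -- #
  | lseq : Phrase → Phrase → Phrase               -- t1 → t2
  | bseq : Split → Split → Phrase → Phrase → Phrase  -- t1 d1<d2 t2
  | bpar : Split → Split → Phrase → Phrase → Phrase  -- t1 d1~d2 t2
deriving DecidableEq, Repr

/-- Evidence terms. -/
inductive Evidence where
  | empty : Evidence                                          -- ξ
  | meas : Symb → Place → Symb → Place → List ℕ → Evidence → Evidence  -- m(ms(m,q,s),p,φ,e)
  | sig  : Evidence → Place → Evidence                        -- [[e]]_p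
  | hash : Evidence → Place → Evidence                        -- #{e}_p
  | seqc : Evidence → Evidence → Evidence                     -- e1 ;; e2
  | parc : Evidence → Evidence → Evidence                     -- e1 || e2
deriving DecidableEq, Repr

/-- The effect `d(e)` of a splitting specification on evidence. -/
def splitEv : Split → Evidence → Evidence
  | .plus, e => e
  | .minus, _ => .empty

/-- The Copland evidence semantics `E(t,p,φ,e)`. -/
def eval : Phrase → Place → List ℕ → Evidence → Evidence
  | .meas m q s, p, φ, e => .meas m q s p φ e
  | .copy, _, _, e => e
  | .sign, p, _, e => .sig e p
  | .hash, p, _, e => .hash e p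
  | .att q t, _, φ, e => eval t q (1 :: φ) e
  | .lseq t1 t2, p, φ, e => eval t2 p (2 :: φ) (eval t1 p (1 :: φ) e)
  | .bseq d1 d2 t1 t2, p, φ, e =>
      .seqc (eval t1 p (1 :: φ) (splitEv d1 e)) (eval t2 p (2 :: φ) (splitEv d2 e))
  | .bpar d1 d2 t1 t2, p, φ, e =>
      .parc (eval t1 p (1 :: φ) (splitEv d1 e)) (eval t2 p (2 :: φ) (splitEv d2 e))

/-- Join operators: sequential `<` or parallel `~`. -/
inductive JoinOp where
  | seqJ
  | parJ
deriving DecidableEq, Repr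

/-- Event labels. -/
inductive Label where
  | msp   : Place → Evidence → Label                    -- p : msp(e)
  | cpy   : Place → Evidence → Label                    -- p : cpy(e)
  | sig   : Place → Evidence → Label                    -- p : sig(e)
  | hsh   : Place → Evidence → Label                    -- p : hsh(e)
  | req   : Place → Place → Evidence → Label            -- p : req(q,e)
  | rpy   : Place → Place → Evidence → Label            -- p : rpy(q,e)
  | split : Place → Split → Split → Evidence → Label    -- p : split(d1,d2,e)
  | join  : Place → JoinOp → Evidence → Label           -- p : join(o,e)
deriving DecidableEq, Repr

/-- The (sending) place `ϱ(v)`: the place before the colon in the label. -/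
def Label.place : Label → Place
  | .msp p _ => p
  | .cpy p _ => p
  | .sig p _ => p
  | .hsh p _ => p
  | .req p _ _ => p
  | .rpy p _ _ => p
  | .split p _ _ _ => p
  | .join p _ _ => p

/-- The receiving place `ϱ'(v)`. -/
def Label.recvPlace : Label → Place
  | .req _ q _ => q
  | .rpy _ q _ => q
  | l => l.place

/-- The evidence `ε(v)`: the last argument of the label. -/
def Label.evid : Label → Evidence
  | .msp _ e => e
  | .cpy _ e => e
  | .sig _ e => e
  | .hsh _ e => e
  | .req _ _ e => e
  | .rpy _ _ e => e
  | .split _ _ _ e => e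
  | .join _ _ e => e

/-- A measurement event is one whose label has the form `p : msp(e)`. -/
def Label.IsMeas (l : Label) : Prop := ∃ p e, l = .msp p e

/-- A cross-place communication event is one with `ϱ(v) ≠ ϱ'(v)`. -/
def Label.IsCross (l : Label) : Prop := l.place ≠ l.recvPlace

/-- A data flow graph: events are the naturals `0, …, n-1`, with an input event,
an output event, flow edges, and a labeling. -/
structure DFG where
  n : ℕ
  vin : ℕ
  vout : ℕ
  edges : List (ℕ × ℕ)
  label : ℕ → Label

namespace DFG

/-- Well-formedness of a data flow graph: events are in range, the flow
relation is acyclic, and there is no edge into the input event nor out of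
the output event. -/
def WF (G : DFG) : Prop :=
  G.vin < G.n ∧ G.vout < G.n ∧
  (∀ pr ∈ G.edges, pr.1 < G.n ∧ pr.2 < G.n) ∧
  (∀ v, ¬ Relation.TransGen (fun a b => (a, b) ∈ G.edges) v v) ∧
  (∀ pr ∈ G.edges, pr.2 ≠ G.vin ∧ pr.1 ≠ G.vout)

/-- The single-event data flow graph. -/
def single (l : Label) : DFG :=
  { n := 1, vin := 0, vout := 0, edges := [], label := fun _ => l }

/-- Before-copy composition: the second graph's events are renumbered after the
first's, and a flow edge links the output of the first to the input of the second. -/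
def seqComp (G1 G2 : DFG) : DFG :=
  { n := G1.n + G2.n
    vin := G1.vin
    vout := G1.n + G2.vout
    edges := G1.edges ++ G2.edges.map (fun pr => (G1.n + pr.1, G1.n + pr.2)) ++
      [(G1.vout, G1.n + G2.vin)]
    label := fun i => if i < G1.n then G1.label i else G2.label (i - G1.n) }

/-- Branching composition: a split event, the two subgraphs (with a flow edge from
the split into the input of a subgraph exactly when the corresponding splitting
specification is `+`), and a join event receiving flow from both outputs. -/
def branch (sp jn : Label) (d1 d2 : Split) (G1 G2 : DFG) : DFG :=
  { n := G1.n + G2.n + 2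
    vin := 0
    vout := G1.n + G2.n + 1
    edges :=
      G1.edges.map (fun pr => (pr.1 + 1, pr.2 + 1)) ++
      G2.edges.map (fun pr => (pr.1 + 1 + G1.n, pr.2 + 1 + G1.n)) ++
      (if d1 = Split.plus then [(0, G1.vin + 1)] else []) ++
      (if d2 = Split.plus then [(0, G2.vin + 1 + G1.n)] else []) ++
      [(G1.vout + 1, G1.n + G2.n + 1), (G2.vout + 1 + G1.n, G1.n + G2.n + 1)]
    label := fun i =>
      if i = 0 then sp
      else if i < G1.n + 1 then G1.label (i - 1)
      else if i < G1.n + G2.n + 1 then G2.label (i - 1 - G1.n)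
      else jn }

end DFG

/-- The Copland data flow semantics `C(t,p,φ,e)`. -/
def sem : Phrase → Place → List ℕ → Evidence → DFG
  | .meas m q s, p, φ, e => .single (.msp p (.meas m q s p φ e))
  | .copy, p, _, e => .single (.cpy p e)
  | .sign, p, _, e => .single (.sig p (.sig e p))
  | .hash, p, _, e => .single (.hsh p (.hash e p))
  | .att q t, p, φ, e =>
      (DFG.single (.req p q e)).seqComp
        ((sem t q (1 :: φ) e).seqComp (.single (.rpy q p (eval t q (1 :: φ) e))))
  | .lseq t1 t2, p, φ, e =>
      (sem t1 p (1 :: φ) e).seqComp (sem t2 p (2 :: φ) (eval t1 p (1 :: φ) e))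
  | .bseq d1 d2 t1 t2, p, φ, e =>
      DFG.branch (.split p d1 d2 e)
        (.join p .seqJ (eval (.bseq d1 d2 t1 t2) p φ e)) d1 d2
        (sem t1 p (1 :: φ) (splitEv d1 e)) (sem t2 p (2 :: φ) (splitEv d2 e))
  | .bpar d1 d2 t1 t2, p, φ, e =>
      DFG.branch (.split p d1 d2 e)
        (.join p .parJ (eval (.bpar d1 d2 t1 t2) p φ e)) d1 d2
        (sem t1 p (1 :: φ) (splitEv d1 e)) (sem t2 p (2 :: φ) (splitEv d2 e))

namespace DFG

/-- A path of a data flow graph: a nonempty sequence of events of the graph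
successively related by flow edges. -/
def IsPath (G : DFG) (π : List ℕ) : Prop :=
  π ≠ [] ∧ (∀ v ∈ π, v < G.n) ∧ π.Chain' (fun a b => (a, b) ∈ G.edges)

/-- One step of the tamper set computation. -/
def tsStep (G : DFG) (s : Set Place) (v : ℕ) : Set Place :=
  match G.label v with
  | .sig p _ => {p} ∩ s
  | _ => s

/-- The tamper set `ts(π)` of a path: `ts(⟨v⟩)` is the set of all places if `v` is a
measurement event and `∅` otherwise; `ts(π § v) = {p} ∩ ts(π)` if `ℓ(v) = p:sig(e)`,
and `ts(π § v) = ts(π)` otherwise. -/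
def ts (G : DFG) (π : List ℕ) : Set Place :=
  match π with
  | [] => ∅
  | v :: rest =>
      rest.foldl (tsStep G)
        (match G.label v with
          | .msp _ _ => Set.univ
          | _ => ∅)

/-- A path is `p`-signing iff every signature event on it occurs at `p`. -/
def Signing (G : DFG) (π : List ℕ) (p : Place) : Prop :=
  ∀ v ∈ π, ∀ q e, G.label v = .sig q e → q = p

/-- A path `π = ⟨v, …, v'⟩` permits tampering (at `v'` with the evidence from `v`)
iff (1) `v` is a measurement event, (2) the length of `π` exceeds 1, and
(3) `π` is `ϱ(v')`-signing or `ϱ'(v')`-signing. -/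
def PermitsTamper (G : DFG) (π : List ℕ) : Prop :=
  (∀ v, π.head? = some v → (G.label v).IsMeas) ∧
  1 < π.length ∧
  (∀ v', π.getLast? = some v' →
    G.Signing π (G.label v').place ∨ G.Signing π (G.label v').recvPlace)

/-- A path `⟨v1,…,vn⟩` is local to place `p` iff every interior event has both
sending and receiving place `p`, and each endpoint has sending or receiving place `p`. -/
def LocalTo (G : DFG) (π : List ℕ) (p : Place) : Prop :=
  (∀ i v, 0 < i → i + 1 < π.length → π[i]? = some v →
      (G.label v).place = p ∧ (G.label v).recvPlace = p) ∧
  (∀ v, π.head? = some v → (G.label v).place = p ∨ (G.label v).recvPlace = p) ∧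
  (∀ v, π.getLast? = some v → (G.label v).place = p ∨ (G.label v).recvPlace = p)

/-- `π` is a path of `G` from `v` to `v'`. -/
def PathBetween (G : DFG) (v v' : ℕ) (π : List ℕ) : Prop :=
  G.IsPath π ∧ π.head? = some v ∧ π.getLast? = some v'

/-- A set `S` of events of `G` is a tamper strategy for `v` iff every path from `v`
to the output event of `G` contains an event `v' ∈ S` such that the prefix
`⟨v, …, v'⟩` of the path permits tampering. -/
def TamperStrategy (G : DFG) (S : Set ℕ) (v : ℕ) : Prop :=
  (∀ w ∈ S, w < G.n) ∧
  ∀ π, G.PathBetween v G.vout π →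
    ∃ v' ∈ S, ∃ π', π' <+: π ∧ π'.getLast? = some v' ∧ G.PermitsTamper π'

/-- `S` is a minimal tamper strategy for `v` iff it is a tamper strategy for `v` and
every tamper strategy for `v` included in `S` equals `S`. -/
def MinimalTamperStrategy (G : DFG) (S : Set ℕ) (v : ℕ) : Prop :=
  G.TamperStrategy S v ∧ ∀ S', G.TamperStrategy S' v → S' ⊆ S → S' = S

/-- A path `π = ⟨v1,…,vn⟩` is protected iff either `v1` is not a measurement event,
or for every `1 < i ≤ n`, if `vi` is a cross-place communication event then
`ts(⟨v1,…,vi⟩) ⊆ {ϱ(vi)}`. -/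
def ProtectedPath (G : DFG) (π : List ℕ) : Prop :=
  (∀ v, π.head? = some v → ¬ (G.label v).IsMeas) ∨
  (∀ i v, 0 < i → i < π.length → π[i]? = some v → (G.label v).IsCross →
      G.ts (π.take (i + 1)) ⊆ {(G.label v).place})

/-- A data flow graph is protected iff all of its paths are protected. -/
def Protected (G : DFG) : Prop :=
  ∀ π, G.IsPath π → G.ProtectedPath π

end DFG

/-- The tamper places function `τ` on evidence. -/
def tau : Evidence → Set Place
  | .empty => ∅
  | .meas _ _ _ _ _ _ => Set.univ
  | .hash e _ => tau e
  | .sig e p => {p} ∩ tau e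
  | .seqc e1 e2 => tau e1 ∪ tau e2
  | .parc e1 e2 => tau e1 ∪ tau e2

open scoped Classical in
/-- The Evidence Protection Program `epp(t,p,e)`. -/
noncomputable def epp : Phrase → Place → Evidence → Phrase
  | .meas m q s, _, _ => .meas m q s
  | .copy, _, _ => .copy
  | .sign, _, _ => .sign
  | .hash, _, _ => .hash
  | .lseq t1 t2, p, e =>
      .lseq (epp t1 p e) (epp t2 p (eval (epp t1 p e) p [] e))
  | .att q t, p, e =>
      if q = p then .att q (epp t p e)
      else if tau e ⊆ {p} then
        if tau (eval (epp t q e) q [] e) ⊆ {q} then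
          .att q (epp t q e)
        else
          .att q (.lseq (epp t q e) .sign)
      else
        if tau (eval (epp t q (.sig e p)) q [] (.sig e p)) ⊆ {q} then
          .lseq .sign (.att q (epp t q (.sig e p)))
        else
          .lseq .sign (.att q (.lseq (epp t q (.sig e p)) .sign))
  | .bseq d1 d2 t1 t2, p, e =>
      .bseq d1 d2 (epp t1 p (splitEv d1 e)) (epp t2 p (splitEv d2 e))
  | .bpar d1 d2 t1 t2, p, e =>
      .bpar d1 d2 (epp t1 p (splitEv d1 e)) (epp t2 p (splitEv d2 e))

end Copland

/-!
Each signature at `p` intersects the tamper set with `{p}`, so the tamper set of a path from a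
measurement event consists of the places `p` for which the path is `p`-signing; any other path
has an empty tamper set. Hence if `π'` starts at a measurement event, it is `ϱ(v)`-signing iff
`ϱ(v) ∈ ts(π')`, and likewise for `ϱ'(v)`. Appending `v` preserves both signing conditions: if `v`
is a signature, it is made at `ϱ(v) = ϱ'(v)`.
-/

namespace Copland.DFG

variable (G : DFG)

theorem signing_append (π₁ π₂ : List ℕ) (p : Place) :
    G.Signing (π₁ ++ π₂) p ↔ G.Signing π₁ p ∧ G.Signing π₂ p :=
  List.forall_mem_append

theorem signing_cons (v : ℕ) (π : List ℕ) (p : Place) :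
    G.Signing (v :: π) p ↔ G.Signing [v] p ∧ G.Signing π p :=
  G.signing_append [v] π p

theorem signing_singleton (v : ℕ) (p : Place) :
    G.Signing [v] p ↔ ∀ q e, G.label v = .sig q e → q = p :=
  List.forall_mem_singleton

theorem signing_singleton_place (v : ℕ) : G.Signing [v] (G.label v).place := by
  rw [signing_singleton]
  intro q e hv
  simp only [hv, Label.place]

theorem signing_singleton_recvPlace (v : ℕ) : G.Signing [v] (G.label v).recvPlace := by
  rw [signing_singleton]
  intro q e hv
  simp only [hv, Label.recvPlace, Label.place]

theorem signing_singleton_of_isMeas {v : ℕ} (hv : (G.label v).IsMeas) (p : Place) :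
    G.Signing [v] p := by
  obtain ⟨q, e, hv⟩ := hv
  simp [signing_singleton, hv]

theorem mem_tsStep_iff (s : Set Place) (v : ℕ) (p : Place) :
    p ∈ G.tsStep s v ↔ p ∈ s ∧ G.Signing [v] p := by
  rw [signing_singleton, tsStep]
  cases G.label v <;> simp [and_comm, eq_comm]

theorem mem_foldl_tsStep_iff (π : List ℕ) (s : Set Place) (p : Place) :
    p ∈ π.foldl G.tsStep s ↔ p ∈ s ∧ G.Signing π p := by
  induction π generalizing s with
  | nil => simp [Signing]
  | cons v π ih => rw [List.foldl_cons, ih, mem_tsStep_iff, signing_cons G v π, and_assoc]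

theorem mem_ts_singleton_iff (v : ℕ) (p : Place) : p ∈ G.ts [v] ↔ (G.label v).IsMeas := by
  rw [ts, List.foldl_nil, Label.IsMeas]
  cases G.label v <;> simp

theorem mem_ts_cons_iff (v : ℕ) (π : List ℕ) (p : Place) :
    p ∈ G.ts (v :: π) ↔ (G.label v).IsMeas ∧ G.Signing (v :: π) p :=
  calc p ∈ G.ts (v :: π)
    _ ↔ p ∈ G.ts [v] ∧ G.Signing π p := G.mem_foldl_tsStep_iff π (G.ts [v]) p
    _ ↔ (G.label v).IsMeas ∧ G.Signing π p := by rw [mem_ts_singleton_iff]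
    _ ↔ (G.label v).IsMeas ∧ G.Signing (v :: π) p := by
      rw [signing_cons]
      exact and_congr_right fun hv => (and_iff_right (G.signing_singleton_of_isMeas hv p)).symm

theorem signing_append_singleton_place (π : List ℕ) (v : ℕ) :
    G.Signing (π ++ [v]) (G.label v).place ↔ G.Signing π (G.label v).place := by
  rw [signing_append, and_iff_left (G.signing_singleton_place v)]

theorem signing_append_singleton_recvPlace (π : List ℕ) (v : ℕ) :
    G.Signing (π ++ [v]) (G.label v).recvPlace ↔ G.Signing π (G.label v).recvPlace := by
  rw [signing_append, and_iff_left (G.signing_singleton_recvPlace v)]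

theorem permitsTamper_cons_append_singleton_iff (w : ℕ) (π : List ℕ) (v : ℕ) :
    G.PermitsTamper (w :: π ++ [v]) ↔ (G.label w).IsMeas ∧
      (G.Signing (w :: π ++ [v]) (G.label v).place ∨
        G.Signing (w :: π ++ [v]) (G.label v).recvPlace) := by
  have hhead : (w :: π ++ [v]).head? = some w := rfl
  have hlast : (w :: π ++ [v]).getLast? = some v := List.getLast?_concat
  have hlen : 1 < (w :: π ++ [v]).length := by simp
  simp only [PermitsTamper, hhead, hlast, hlen, Option.some.injEq, forall_eq', true_and]

end Copland.DFG

open Copland in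
theorem permitsTamper_iff_ts_general (G : DFG) {π' : List ℕ} (hπ' : π' ≠ []) (v : ℕ) :
    G.PermitsTamper (π' ++ [v]) ↔
      (G.label v).place ∈ G.ts π' ∨ (G.label v).recvPlace ∈ G.ts π' := by
  obtain ⟨w, π, rfl⟩ := List.exists_cons_of_ne_nil hπ'
  rw [DFG.permitsTamper_cons_append_singleton_iff, DFG.signing_append_singleton_place,
    DFG.signing_append_singleton_recvPlace, DFG.mem_ts_cons_iff, DFG.mem_ts_cons_iff, and_or_left]

open Copland in
/-- Characterization of tamper-permitting paths via tamper sets: for a path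
`π = π' § v` starting at a measurement event (with `π'` a nonempty path),
`π` permits tampering iff `ϱ(v) ∈ ts(π')` or `ϱ'(v) ∈ ts(π')`. -/
theorem permitsTamper_iff_ts (G : DFG) (hG : G.WF) (π' : List ℕ) (v : ℕ)
    (hπ' : G.IsPath π') (hπ : G.IsPath (π' ++ [v]))
    (hm : ∀ w, (π' ++ [v]).head? = some w → (G.label w).IsMeas) :
    G.PermitsTamper (π' ++ [v]) ↔
      (G.label v).place ∈ G.ts π' ∨ (G.label v).recvPlace ∈ G.ts π' :=
  permitsTamper_iff_ts_general G hπ'.1 v
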